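/- Let α, β, d ∈ ℤ_{≥0} and let P_d^{(α,β)} denote the Jacobi polynomial. For x ∈ ℝ∖{−1,1} one has Q_d^{(α,β)}(x) = ((−1)^α/2) P_d^{(α,β)}(x) log|(x+1)/(x−1)| + R(x)/((x−1)^α (x+1)^β), where R ∈ ℚ[x] is a polynomial of degree d + α + β − 1. -/

import Mathlib

/-!
Integrating by parts `d` times moves `d` derivatives from the kernel `(z - t)^{-(d+1)}` onto the
weight `(1-t)^{d+α} (1+t)^{d+β}`, which vanishes to order `d` at `±1`
(`integral_cauchyKernel_pow`). By the Rodrigues formula (`iterate_derivative_rodriguesWeight`) the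
result is, up to a constant, the Cauchy transform `∫ V(t)/(z - t) dt` over `[-1,1]` of
`V = 2^d (t-1)^α (t+1)^β P_d^{(α,β)}(t)`.

Writing `V(t) = V(z) - (V(z) - V(t))`, this transform is
`V(z) (log (z+1) - log (z-1)) - S(z)` with `S` a rational polynomial
(`exists_cauchyTransform`). The coefficient of `S` in degree `deg V - 1` is twice the leading
coefficient of `V`, which is a sum of nonnegative terms, not all zero
(`coeff_weightedJacobi_ne_zero`); this gives the degree. Dividing by `(z-1)^α (z+1)^β` turns `V`
into `P_d^{(α,β)}` and `S` into the rational term.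

The average of the two boundary values (`tendsto_average`) replaces `log (z+1) - log (z-1)` by its
real part, since the logarithms at conjugate points are conjugate and the jump in their imaginary
parts stays bounded.
-/


open Complex Filter MeasureTheory
open scoped Real Topology

noncomputable section

/-- The Jacobi function of the second kind `Q_d^{(α,β)}(z)` on the cut plane `ℂ ∖ [-1,1]`,
defined by the classical integral representation. -/
def Qcut (d α β : ℕ) (z : ℂ) : ℂ :=
  (z - 1) ^ (-(α : ℤ)) * (z + 1) ^ (-(β : ℤ)) / 2 ^ (d + 1) *
    ∫ t in (-1 : ℝ)..1, ((1 : ℂ) - t) ^ (d + α) * ((1 : ℂ) + t) ^ (d + β) / ((z : ℂ) - t) ^ (d + 1)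

/-- The Jacobi function of the second kind at a real argument, extended to `(-1,1)` by the
average `½(Q(x+i0) + Q(x-i0))` of the boundary values. -/
def QJ (d α β : ℕ) (x : ℝ) : ℂ :=
  limUnder (𝓝[>] (0 : ℝ)) fun ε =>
    (Qcut d α β (x + ε * Complex.I) + Qcut d α β (x - ε * Complex.I)) / 2

/-- The classical Jacobi polynomial `P_d^{(α,β)}`, as a function on `ℝ`. -/
def jacobiP (d α β : ℕ) (x : ℝ) : ℝ :=
  ∑ s ∈ Finset.range (d + 1),
    ((d + α).choose (d - s) : ℝ) * ((d + β).choose s : ℝ) *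
      ((x - 1) / 2) ^ s * ((x + 1) / 2) ^ (d - s)

open Polynomial in
/-- The Rodrigues weight `(X - 1)^(d+α) (X + 1)^(d+β)`; it agrees with
`(1 - X)^(d+α) (1 + X)^(d+β)` up to the sign `(-1)^(d+α)`. -/
def rodriguesWeight (d α β : ℕ) : ℚ[X] := (X - C 1) ^ (d + α) * (X + C 1) ^ (d + β)

open Polynomial in
/-- The polynomial `2^d (X - 1)^α (X + 1)^β P_d^{(α,β)}`, written out as an explicit sum. -/
def weightedJacobi (d α β : ℕ) : ℚ[X] :=
  ∑ s ∈ Finset.range (d + 1),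
    C (((d + α).choose (d - s) : ℚ) * ((d + β).choose s : ℚ)) *
      ((X - C 1) ^ (α + s) * (X + C 1) ^ (β + (d - s)))

/-! ### The Rodrigues formula -/

/-- Rodrigues' formula, from the Leibniz rule. -/
lemma iterate_derivative_rodriguesWeight (d α β : ℕ) :
    Polynomial.derivative^[d] (rodriguesWeight d α β) =
      Polynomial.C (d.factorial : ℚ) * weightedJacobi d α β := by
  rw [rodriguesWeight, Polynomial.iterate_derivative_mul, weightedJacobi, Finset.mul_sum]
  refine Finset.sum_congr rfl fun s hs => ?_
  have hs' : s ≤ d := Nat.lt_succ_iff.mp (Finset.mem_range.mp hs)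
  rw [Polynomial.iterate_derivative_X_sub_pow, Polynomial.iterate_derivative_X_add_pow,
    show d + α - (d - s) = α + s by omega, show d + β - s = β + (d - s) by omega,
    Nat.descFactorial_eq_factorial_mul_choose, Nat.descFactorial_eq_factorial_mul_choose,
    ← Nat.choose_mul_factorial_mul_factorial hs']
  simp only [nsmul_eq_mul, Polynomial.C_mul, Nat.cast_mul, map_natCast]
  ring

lemma aeval_weightedJacobi (d α β : ℕ) (x : ℝ) :
    (Polynomial.aeval x (weightedJacobi d α β) : ℝ) =
      2 ^ d * ((x - 1) ^ α * (x + 1) ^ β * jacobiP d α β x) := by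
  rw [weightedJacobi, map_sum, jacobiP, Finset.mul_sum, Finset.mul_sum]
  refine Finset.sum_congr rfl fun s hs => ?_
  have hs' : s ≤ d := Nat.lt_succ_iff.mp (Finset.mem_range.mp hs)
  obtain ⟨e, rfl⟩ := Nat.exists_eq_add_of_le hs'
  simp only [map_mul, map_pow, map_add, map_sub, Polynomial.aeval_X,
    map_natCast, map_one, Nat.add_sub_cancel_left, div_pow, pow_add]
  field_simp

lemma natDegree_weightedJacobi_le (d α β : ℕ) :
    (weightedJacobi d α β).natDegree ≤ d + α + β := by
  refine Polynomial.natDegree_sum_le_of_forall_le _ _ fun s hs => ?_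
  have hs' : s ≤ d := Nat.lt_succ_iff.mp (Finset.mem_range.mp hs)
  refine (Polynomial.natDegree_C_mul_le _ _).trans ?_
  rw [Polynomial.natDegree_mul (pow_ne_zero _ (Polynomial.X_sub_C_ne_zero _))
    (pow_ne_zero _ (Polynomial.X_add_C_ne_zero _)), Polynomial.natDegree_pow,
    Polynomial.natDegree_pow, Polynomial.natDegree_X_sub_C, Polynomial.natDegree_X_add_C]
  omega

/-- All summands of `weightedJacobi` have a nonnegative coefficient in the top degree and the
first one a positive coefficient, so no cancellation occurs. -/
lemma coeff_weightedJacobi_ne_zero (d α β : ℕ) :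
    (weightedJacobi d α β).coeff (d + α + β) ≠ 0 := by
  have key : (weightedJacobi d α β).coeff (d + α + β) =
      ∑ s ∈ Finset.range (d + 1), ((d + α).choose (d - s) : ℚ) * ((d + β).choose s : ℚ) := by
    rw [weightedJacobi, Polynomial.finsetSum_coeff]
    refine Finset.sum_congr rfl fun s hs => ?_
    have hs' : s ≤ d := Nat.lt_succ_iff.mp (Finset.mem_range.mp hs)
    have hm : ((Polynomial.X - Polynomial.C (1 : ℚ)) ^ (α + s) *
        (Polynomial.X + Polynomial.C (1 : ℚ)) ^ (β + (d - s))).Monic :=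
      ((Polynomial.monic_X_sub_C _).pow _).mul ((Polynomial.monic_X_add_C _).pow _)
    have hd : ((Polynomial.X - Polynomial.C (1 : ℚ)) ^ (α + s) *
        (Polynomial.X + Polynomial.C (1 : ℚ)) ^ (β + (d - s))).natDegree = d + α + β := by
      rw [Polynomial.natDegree_mul (pow_ne_zero _ (Polynomial.X_sub_C_ne_zero _))
        (pow_ne_zero _ (Polynomial.X_add_C_ne_zero _)), Polynomial.natDegree_pow,
        Polynomial.natDegree_pow, Polynomial.natDegree_X_sub_C, Polynomial.natDegree_X_add_C]
      omega
    rw [Polynomial.coeff_C_mul, ← hd, hm.coeff_natDegree, mul_one]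
  rw [key]
  refine (Finset.sum_pos' (fun s _ => by positivity) ⟨0, by simp, ?_⟩).ne'
  have : 0 < (d + α).choose (d - 0) := Nat.choose_pos (by omega)
  have h2 : 0 < (d + β).choose 0 := Nat.choose_pos (by omega)
  positivity

/-! ### Cauchy transforms of polynomials -/

lemma sub_ofReal_ne_zero {z : ℂ} (hz : z.im ≠ 0) (t : ℝ) : z - t ≠ 0 := by
  intro h
  apply hz
  simpa using congrArg Complex.im h

lemma continuous_cauchyKernel {z : ℂ} (hz : z.im ≠ 0) (f : Polynomial ℚ) (n : ℕ) :
    Continuous fun t : ℝ => (Polynomial.aeval (t : ℂ) f : ℂ) / (z - t) ^ n := by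
  have hf : Continuous fun t : ℝ => (Polynomial.aeval (t : ℂ) f : ℂ) :=
    (Polynomial.continuous_aeval f).comp Complex.continuous_ofReal
  exact hf.div (by fun_prop) fun t => pow_ne_zero _ (sub_ofReal_ne_zero hz t)

/-- One integration by parts against the kernel; the boundary terms vanish by `h1` and `h2`. -/
lemma integral_cauchyKernel_succ {z : ℂ} (hz : z.im ≠ 0) (f : Polynomial ℚ) (n : ℕ)
    (h1 : f.eval 1 = 0) (h2 : f.eval (-1) = 0) :
    ((n : ℂ) + 1) * ∫ t in (-1 : ℝ)..1, (Polynomial.aeval (t : ℂ) f : ℂ) / (z - t) ^ (n + 2) =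
      -∫ t in (-1 : ℝ)..1,
        (Polynomial.aeval (t : ℂ) (Polynomial.derivative f) : ℂ) / (z - t) ^ (n + 1) := by
  have hder : ∀ t ∈ Set.uIcc (-1 : ℝ) 1,
      HasDerivAt (fun t : ℝ => (Polynomial.aeval (t : ℂ) f : ℂ) / (z - t) ^ (n + 1))
        ((Polynomial.aeval (t : ℂ) (Polynomial.derivative f) : ℂ) / (z - t) ^ (n + 1) +
          ((n : ℂ) + 1) * ((Polynomial.aeval (t : ℂ) f : ℂ) / (z - t) ^ (n + 2))) t := by
    intro t _
    have h0 := sub_ofReal_ne_zero hz t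
    have hf := (Polynomial.hasDerivAt_aeval f (t : ℂ)).comp_ofReal
    have hk : HasDerivAt (fun t : ℝ => (z - t) ^ (n + 1))
        (((n + 1 : ℕ) : ℂ) * (z - t) ^ n * (-1)) t := by
      have := (((hasDerivAt_id (t : ℂ)).comp_ofReal).const_sub z).pow (n + 1)
      exact this.congr_deriv (by simp)
    refine (hf.div hk (pow_ne_zero _ h0)).congr_deriv ?_
    push_cast
    have h3 := pow_ne_zero n h0
    field_simp
    ring
  have hi1 := (continuous_cauchyKernel hz (Polynomial.derivative f) (n + 1)).intervalIntegrable
    (μ := volume) (-1) 1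
  have hi2 := ((continuous_cauchyKernel hz f (n + 2)).intervalIntegrable
    (μ := volume) (-1) 1).const_mul ((n : ℂ) + 1)
  have hmain := intervalIntegral.integral_eq_sub_of_hasDerivAt hder (hi1.add hi2)
  have e1 : (Polynomial.aeval ((1 : ℝ) : ℂ) f : ℂ) = 0 := by
    have := Polynomial.aeval_algebraMap_apply ℂ (1 : ℚ) f
    simpa [h1] using this
  have e2 : (Polynomial.aeval ((-1 : ℝ) : ℂ) f : ℂ) = 0 := by
    have := Polynomial.aeval_algebraMap_apply ℂ (-1 : ℚ) f
    simpa [h2] using this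
  rw [intervalIntegral.integral_add hi1 hi2, intervalIntegral.integral_const_mul, e1, e2] at hmain
  linear_combination hmain

/-- Iterated integration by parts: a polynomial vanishing to order `d` at both endpoints
trades the kernel `(z - t)^(-(d+1))` for `(z - t)^(-1)`. -/
lemma integral_cauchyKernel_pow {z : ℂ} (hz : z.im ≠ 0) (d : ℕ) :
    ∀ f : Polynomial ℚ,
      ((Polynomial.X - Polynomial.C 1) * (Polynomial.X + Polynomial.C 1)) ^ d ∣ f →
      (d.factorial : ℂ) *
          ∫ t in (-1 : ℝ)..1, (Polynomial.aeval (t : ℂ) f : ℂ) / (z - t) ^ (d + 1) =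
        (-1) ^ d * ∫ t in (-1 : ℝ)..1,
          (Polynomial.aeval (t : ℂ) (Polynomial.derivative^[d] f) : ℂ) / (z - t) := by
  induction d with
  | zero => intro f _; simp
  | succ d ih =>
    intro f hf
    have h1 : f.eval 1 = 0 := by
      obtain ⟨g, rfl⟩ := hf
      simp
    have h2 : f.eval (-1) = 0 := by
      obtain ⟨g, rfl⟩ := hf
      simp
    have hd := Polynomial.pow_sub_one_dvd_derivative_of_pow_dvd hf
    have hs := integral_cauchyKernel_succ hz f d h1 h2
    have hi := ih _ hd
    rw [Function.iterate_succ_apply, Nat.factorial_succ, pow_succ]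
    push_cast
    linear_combination (d.factorial : ℂ) * hs - hi

/-- `∫_{-1}^{1} V` is rational for rational `V`; its value for constant `V` is recorded because
it feeds the leading coefficient in `exists_cauchyTransform`. -/
lemma exists_integral_eq_ratCast (V : Polynomial ℚ) :
    ∃ I : ℚ, (∫ t in (-1 : ℝ)..1, (Polynomial.aeval (t : ℂ) V : ℂ)) = I ∧
      (V.natDegree = 0 → I = 2 * V.coeff 0) := by
  by_cases hV : V.natDegree = 0
  · refine ⟨2 * V.coeff 0, ?_, fun _ => rfl⟩
    rw [Polynomial.eq_C_of_natDegree_eq_zero hV]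
    simp
    norm_num
  · refine ⟨∑ i ∈ Finset.range (V.natDegree + 1),
      V.coeff i * ((1 ^ (i + 1) - (-1) ^ (i + 1)) / (i + 1)), ?_, fun h => absurd h hV⟩
    simp_rw [Polynomial.aeval_eq_sum_range]
    rw [intervalIntegral.integral_finsetSum]
    · push_cast
      refine Finset.sum_congr rfl fun i _ => ?_
      have h := congrArg (fun r : ℝ => (r : ℂ)) (integral_pow (a := -1) (b := 1) i)
      simp only [← intervalIntegral.integral_ofReal] at h
      push_cast at h
      rw [← h, ← intervalIntegral.integral_const_mul]
      simp [Rat.smul_def]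
    · intro i _
      apply Continuous.intervalIntegrable
      fun_prop

/-- Splitting `V(t) = V(z) - (V(z) - V(t))`: the Cauchy transform of `V` on `[-1,1]` is
`V(z)` times that of `1`, minus a rational polynomial `S` in `z`. The recursion
`V = X V₁ + c`, `S = X S₁ + ∫ V₁` follows the leading coefficient of `S`. -/
lemma exists_cauchyTransform (n : ℕ) :
    ∀ V : Polynomial ℚ, V.natDegree ≤ n → ∃ S : Polynomial ℚ,
      (∀ k, n ≤ k + 1 → S.coeff k = 2 * V.coeff (k + 1)) ∧
      ∀ z : ℂ, z.im ≠ 0 →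
        ∫ t in (-1 : ℝ)..1, (Polynomial.aeval (t : ℂ) V : ℂ) / (z - t) =
          Polynomial.aeval z V * (∫ t in (-1 : ℝ)..1, 1 / (z - t)) - Polynomial.aeval z S := by
  induction n with
  | zero =>
    intro V hV
    refine ⟨0, fun k _ => ?_, fun z _ => ?_⟩
    · rw [Polynomial.coeff_eq_zero_of_natDegree_lt (p := V) (by omega)]
      simp
    · rw [Polynomial.eq_C_of_natDegree_le_zero hV]
      simp only [Polynomial.aeval_C, map_zero, sub_zero, ← intervalIntegral.integral_const_mul,
        mul_one_div]
  | succ n ih =>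
    intro V hV
    have hV1 : V.divX.natDegree ≤ n := by
      rw [Polynomial.natDegree_divX_eq_natDegree_tsub_one]; omega
    obtain ⟨S, hS, hz⟩ := ih V.divX hV1
    obtain ⟨I, hI, hI0⟩ := exists_integral_eq_ratCast V.divX
    refine ⟨S * Polynomial.X + Polynomial.C I, ?_, ?_⟩
    · intro k hk
      rcases k with _ | k
      · have : V.divX.natDegree = 0 := by omega
        simp [hI0 this]
      · rw [Polynomial.coeff_add, Polynomial.coeff_mul_X, Polynomial.coeff_C_succ, add_zero,
          hS k (by omega), Polynomial.coeff_divX]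
    · intro z him
      have hpt : ∀ t : ℝ, (Polynomial.aeval (t : ℂ) V : ℂ) / (z - t) =
          z * ((Polynomial.aeval (t : ℂ) V.divX : ℂ) / (z - t)) - Polynomial.aeval (t : ℂ) V.divX
            + (V.coeff 0 : ℂ) * (1 / (z - t)) := by
        intro t
        have h0 := sub_ofReal_ne_zero him t
        conv_lhs => rw [← Polynomial.divX_mul_X_add V]
        simp only [map_add, map_mul, Polynomial.aeval_X, Polynomial.aeval_C, eq_ratCast]
        field_simp
        ring
      have c1 : Continuous fun t : ℝ => (Polynomial.aeval (t : ℂ) V.divX : ℂ) / (z - t) := by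
        simpa using continuous_cauchyKernel him V.divX 1
      have c2 : Continuous fun t : ℝ => (Polynomial.aeval (t : ℂ) V.divX : ℂ) := by
        simpa using continuous_cauchyKernel him V.divX 0
      have c3 : Continuous fun t : ℝ => (1 : ℂ) / (z - t) := by
        simpa using continuous_cauchyKernel him 1 1
      have e : (Polynomial.aeval z V : ℂ) = Polynomial.aeval z V.divX * z + V.coeff 0 := by
        conv_lhs => rw [← Polynomial.divX_mul_X_add V]
        simp
      have c12 : Continuous fun t : ℝ => z * ((Polynomial.aeval (t : ℂ) V.divX : ℂ) / (z - t)) -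
          Polynomial.aeval (t : ℂ) V.divX := (c1.const_mul z).sub c2
      simp_rw [hpt]
      rw [intervalIntegral.integral_add (c12.intervalIntegrable _ _)
          ((c3.const_mul _).intervalIntegrable _ _),
        intervalIntegral.integral_sub ((c1.const_mul z).intervalIntegrable _ _)
          (c2.intervalIntegrable _ _),
        intervalIntegral.integral_const_mul, intervalIntegral.integral_const_mul, hz z him, hI, e]
      simp only [map_add, map_mul, Polynomial.aeval_X, Polynomial.aeval_C, eq_ratCast]
      ring

/-! ### The logarithm and its boundary values -/

lemma integral_one_div_sub {z : ℂ} (hz : z.im ≠ 0) :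
    ∫ t in (-1 : ℝ)..1, 1 / (z - t) = Complex.log (z + 1) - Complex.log (z - 1) := by
  have hder : ∀ t ∈ Set.uIcc (-1 : ℝ) 1,
      HasDerivAt (fun t : ℝ => -Complex.log (z - t)) (1 / (z - t)) t := by
    intro t _
    have h := ((((hasDerivAt_id (t : ℂ)).comp_ofReal).const_sub z).clog_real
      (Or.inr (by simpa using hz))).neg
    exact h.congr_deriv (by simp [neg_div])
  have c : Continuous fun t : ℝ => (1 : ℂ) / (z - t) := by
    simpa using continuous_cauchyKernel hz 1 1
  rw [intervalIntegral.integral_eq_sub_of_hasDerivAt hder (c.intervalIntegrable _ _)]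
  push_cast
  ring_nf

lemma log_add_log_conj {z : ℂ} (hz : z.im ≠ 0) :
    Complex.log z + Complex.log (starRingEnd ℂ z) = 2 * (Real.log ‖z‖ : ℂ) := by
  have harg : z.arg ≠ π := fun h => hz (Complex.arg_eq_pi_iff.mp h).2
  rw [Complex.log_conj z harg, Complex.add_conj, Complex.log_re]
  push_cast
  ring

/-- The imaginary part of the logarithm is bounded, so on a bounded region away from `0` so is
the logarithm. -/
lemma isBoundedUnder_norm_log {l : Filter ℝ} {w : ℝ → ℂ} {c : ℂ} (hc : c ≠ 0)
    (hw : Tendsto w l (𝓝 c)) :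
    l.IsBoundedUnder (· ≤ ·) fun ε => ‖Complex.log (w ε)‖ := by
  have h1 : Tendsto (fun ε => |Real.log ‖w ε‖| + π) l (𝓝 (|Real.log ‖c‖| + π)) :=
    ((hw.norm.log (norm_ne_zero_iff.mpr hc)).abs).add_const _
  refine h1.isBoundedUnder_le.mono_le (Eventually.of_forall fun ε => ?_)
  refine (Complex.norm_le_abs_re_add_abs_im _).trans ?_
  rw [Complex.log_re, Complex.log_im]
  exact add_le_add_right (Complex.abs_arg_le_pi _) _

/-! ### Assembling the formula -/

/-- The formula for `Q` off the real axis. -/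
lemma Qcut_eq (d α β : ℕ) {S : Polynomial ℚ}
    (hS : ∀ z : ℂ, z.im ≠ 0 →
        ∫ t in (-1 : ℝ)..1, (Polynomial.aeval (t : ℂ) (weightedJacobi d α β) : ℂ) / (z - t) =
          Polynomial.aeval z (weightedJacobi d α β) * (∫ t in (-1 : ℝ)..1, 1 / (z - t))
            - Polynomial.aeval z S) {z : ℂ} (hz : z.im ≠ 0) :
    Qcut d α β z = (-1) ^ α / 2 ^ (d + 1) / ((z - 1) ^ α * (z + 1) ^ β) *
      (Polynomial.aeval z (weightedJacobi d α β) * (Complex.log (z + 1) - Complex.log (z - 1))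
        - Polynomial.aeval z S) := by
  have hpt : ∀ t : ℝ, ((1 : ℂ) - t) ^ (d + α) * ((1 : ℂ) + t) ^ (d + β) / (z - t) ^ (d + 1) =
      (-1) ^ (d + α) *
        ((Polynomial.aeval (t : ℂ) (rodriguesWeight d α β) : ℂ) / (z - t) ^ (d + 1)) := by
    intro t
    rw [rodriguesWeight, show (1 : ℂ) - t = (-1) * (t - 1) by ring, mul_pow, add_comm (1 : ℂ)]
    simp
    ring
  have hdvd : ((Polynomial.X - Polynomial.C 1) * (Polynomial.X + Polynomial.C 1)) ^ d ∣
      rodriguesWeight d α β := by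
    rw [mul_pow]
    exact mul_dvd_mul (pow_dvd_pow _ (by omega)) (pow_dvd_pow _ (by omega))
  have hibp := integral_cauchyKernel_pow hz d _ hdvd
  rw [iterate_derivative_rodriguesWeight] at hibp
  simp only [map_mul, map_natCast, mul_div_assoc] at hibp
  rw [intervalIntegral.integral_const_mul, mul_left_comm] at hibp
  have hfac : (d.factorial : ℂ) ≠ 0 := Nat.cast_ne_zero.mpr d.factorial_ne_zero
  have hI := mul_left_cancel₀ hfac hibp
  rw [← integral_one_div_sub hz, ← hS z hz, Qcut]
  simp_rw [hpt]
  have hsign : ((-1 : ℂ)) ^ d * (-1) ^ d = 1 := by rw [← mul_pow]; norm_num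
  rw [intervalIntegral.integral_const_mul, hI, zpow_neg, zpow_neg, zpow_natCast, zpow_natCast,
    pow_add (-1 : ℂ) d α, div_eq_mul_inv _ ((z - 1) ^ α * (z + 1) ^ β), mul_inv]
  generalize (∫ t in (-1 : ℝ)..1,
    (Polynomial.aeval (t : ℂ) (weightedJacobi d α β) : ℂ) / (z - t)) = J
  linear_combination (((z - 1) ^ α)⁻¹ * ((z + 1) ^ β)⁻¹ / 2 ^ (d + 1) * (-1) ^ α * J) * hsign

/-- Boundary values of `A(z) (log (z + 1) - log (z - 1)) - B(z)` averaged over both sides of the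
real axis. Only the sum of the two logarithms converges by continuity; the leftover term
`(A(x - iε) - A(x + iε)) log (…)` is a null sequence times a bounded one. -/
lemma tendsto_average {A B : ℂ → ℂ} {x : ℝ} (hx1 : x ≠ -1) (hx2 : x ≠ 1)
    (hA : ContinuousAt A x) (hB : ContinuousAt B x) :
    Tendsto (fun ε : ℝ =>
      ((A (x + ε * Complex.I) * (Complex.log (x + ε * Complex.I + 1)
          - Complex.log (x + ε * Complex.I - 1)) - B (x + ε * Complex.I)) +
        (A (x - ε * Complex.I) * (Complex.log (x - ε * Complex.I + 1)
          - Complex.log (x - ε * Complex.I - 1)) - B (x - ε * Complex.I))) / 2)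
      (𝓝[>] 0) (𝓝 (A x * (Real.log |(x + 1) / (x - 1)| : ℝ) - B x)) := by
  have hp : Tendsto (fun ε : ℝ => (x : ℂ) + ε * Complex.I) (𝓝[>] 0) (𝓝 (x : ℂ)) := by
    refine tendsto_nhdsWithin_of_tendsto_nhds ?_
    exact Continuous.tendsto' (by fun_prop) _ _ (by simp)
  have hm : Tendsto (fun ε : ℝ => (x : ℂ) - ε * Complex.I) (𝓝[>] 0) (𝓝 (x : ℂ)) := by
    refine tendsto_nhdsWithin_of_tendsto_nhds ?_
    exact Continuous.tendsto' (by fun_prop) _ _ (by simp)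
  have hc1 : (x : ℂ) + 1 ≠ 0 := by
    intro h; apply hx1; have : x + 1 = 0 := by exact_mod_cast h
    linarith
  have hc2 : (x : ℂ) - 1 ≠ 0 := by
    intro h; apply hx2; have : x - 1 = 0 := by exact_mod_cast h
    linarith
  have hAp := hA.tendsto.comp hp
  have hAm := hA.tendsto.comp hm
  have hBp := hB.tendsto.comp hp
  have hBm := hB.tendsto.comp hm
  have hz := hAm.sub hAp
  rw [sub_self] at hz
  have hz1 := hz.zero_mul_isBoundedUnder_le (isBoundedUnder_norm_log hc1 (hm.add_const 1))
  have hz2 := hz.zero_mul_isBoundedUnder_le (isBoundedUnder_norm_log hc2 (hm.sub_const 1))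
  have hl1 := (hp.add_const 1).norm.log (norm_ne_zero_iff.mpr hc1)
  have hl2 := (hp.sub_const 1).norm.log (norm_ne_zero_iff.mpr hc2)
  have hlog := (Complex.continuous_ofReal.tendsto _).comp (hl1.sub hl2)
  have key := ((hAp.mul hlog).add ((hz1.sub hz2).div_const 2)).sub ((hBp.add hBm).div_const 2)
  have hlim : Real.log ‖(x : ℂ) + 1‖ - Real.log ‖(x : ℂ) - 1‖ =
      Real.log |(x + 1) / (x - 1)| := by
    have h1 : ‖(x : ℂ) + 1‖ = |x + 1| := by
      rw [← Complex.ofReal_one, ← Complex.ofReal_add, Complex.norm_real, Real.norm_eq_abs]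
    have h2 : ‖(x : ℂ) - 1‖ = |x - 1| := by
      rw [← Complex.ofReal_one, ← Complex.ofReal_sub, Complex.norm_real, Real.norm_eq_abs]
    rw [abs_div, Real.log_div, h1, h2]
    · rw [← h1]; exact norm_ne_zero_iff.mpr hc1
    · rw [← h2]; exact norm_ne_zero_iff.mpr hc2
  have key' := key.congr' (f₂ := fun ε : ℝ =>
      ((A (x + ε * Complex.I) * (Complex.log (x + ε * Complex.I + 1)
          - Complex.log (x + ε * Complex.I - 1)) - B (x + ε * Complex.I)) +
        (A (x - ε * Complex.I) * (Complex.log (x - ε * Complex.I + 1)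
          - Complex.log (x - ε * Complex.I - 1)) - B (x - ε * Complex.I))) / 2) ?_
  · convert key' using 2
    rw [hlim]
    ring
  · filter_upwards [self_mem_nhdsWithin] with ε hε
    have hε' : ε ≠ 0 := (Set.mem_Ioi.mp hε).ne'
    have g1 := log_add_log_conj (z := (x : ℂ) + ε * Complex.I + 1) (by simpa using hε')
    have g2 := log_add_log_conj (z := (x : ℂ) + ε * Complex.I - 1) (by simpa using hε')
    have s1 : starRingEnd ℂ ((x : ℂ) + ε * Complex.I + 1) = (x : ℂ) - ε * Complex.I + 1 := by
      simp; ring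
    have s2 : starRingEnd ℂ ((x : ℂ) + ε * Complex.I - 1) = (x : ℂ) - ε * Complex.I - 1 := by
      simp; ring
    rw [s1] at g1
    rw [s2] at g2
    simp only [Function.comp_apply]
    push_cast
    linear_combination (A (x + ε * Complex.I) / 2) * (g2 - g1)

/-- **Proposition 4**, first part: for integer parameters, `Q_d^{(α,β)}` is an elementary
function, namely `((-1)^α/2)·P_d^{(α,β)}(x)·log|(x+1)/(x-1)| + R(x)/((x-1)^α (x+1)^β)` with
`R` a rational polynomial of degree `d + α + β - 1`. -/
theorem jacobiQ_elementary (d α β : ℕ) :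
    ∃ R : Polynomial ℚ, R.natDegree = d + α + β - 1 ∧
      ∀ x : ℝ, x ≠ -1 → x ≠ 1 →
        QJ d α β x =
          ((((-1 : ℝ)) ^ α / 2 * jacobiP d α β x * Real.log |(x + 1) / (x - 1)|
            + (Polynomial.aeval x R : ℝ) / ((x - 1) ^ α * (x + 1) ^ β) : ℝ) : ℂ) := by
  have hdeg := natDegree_weightedJacobi_le d α β
  obtain ⟨S, hcoeff, hS⟩ := exists_cauchyTransform _ _ hdeg
  have hk : (-((-1 : ℚ) ^ α / 2 ^ (d + 1))) ≠ 0 :=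
    neg_ne_zero.mpr (div_ne_zero (pow_ne_zero _ (by norm_num)) (by positivity))
  refine ⟨Polynomial.C (-((-1 : ℚ) ^ α / 2 ^ (d + 1))) * S, ?_, ?_⟩
  · rw [Polynomial.natDegree_C_mul hk]
    apply le_antisymm
    · rw [Polynomial.natDegree_le_iff_coeff_eq_zero]
      intro k hk
      rw [hcoeff k (by omega), Polynomial.coeff_eq_zero_of_natDegree_lt (by omega), mul_zero]
    · rcases Nat.eq_zero_or_pos (d + α + β) with h0 | hpos
      · omega
      · apply Polynomial.le_natDegree_of_ne_zero
        rw [hcoeff _ (by omega), Nat.sub_add_cancel hpos]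
        exact mul_ne_zero two_ne_zero (coeff_weightedJacobi_ne_zero d α β)
  · intro x hx1 hx2
    have hc1 : x + 1 ≠ 0 := fun h => hx1 (by linarith)
    have hc2 : x - 1 ≠ 0 := fun h => hx2 (by linarith)
    have hc1' : (x : ℂ) + 1 ≠ 0 := by exact_mod_cast hc1
    have hc2' : (x : ℂ) - 1 ≠ 0 := by exact_mod_cast hc2
    let K : ℂ → ℂ := fun z => (-1) ^ α / 2 ^ (d + 1) / ((z - 1) ^ α * (z + 1) ^ β)
    have hK : ContinuousAt K x :=
      continuousAt_const.div (by fun_prop)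
        (mul_ne_zero (pow_ne_zero _ hc2') (pow_ne_zero _ hc1'))
    have hlim := tendsto_average
      (A := fun z => K z * Polynomial.aeval z (weightedJacobi d α β))
      (B := fun z => K z * Polynomial.aeval z S) hx1 hx2
      (hK.mul (Polynomial.continuous_aeval _).continuousAt)
      (hK.mul (Polynomial.continuous_aeval _).continuousAt)
    have hQ : QJ d α β x = K x * Polynomial.aeval (x : ℂ) (weightedJacobi d α β) *
        (Real.log |(x + 1) / (x - 1)| : ℝ) - K x * Polynomial.aeval (x : ℂ) S := by
      refine Tendsto.limUnder_eq (hlim.congr' ?_)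
      filter_upwards [self_mem_nhdsWithin] with ε hε
      have hε' : ε ≠ 0 := (Set.mem_Ioi.mp hε).ne'
      rw [Qcut_eq d α β hS (z := x + ε * Complex.I) (by simpa using hε'),
        Qcut_eq d α β hS (z := x - ε * Complex.I) (by simpa using hε')]
      ring
    have hreal : ∀ V : Polynomial ℚ,
        (Polynomial.aeval (x : ℂ) V : ℂ) = ((Polynomial.aeval x V : ℝ) : ℂ) :=
      fun V => Polynomial.aeval_algebraMap_apply ℂ x V
    have hKx : K x = (((-1) ^ α / 2 ^ (d + 1) / ((x - 1) ^ α * (x + 1) ^ β) : ℝ) : ℂ) := by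
      simp [K]
    rw [hQ, hreal, hreal, aeval_weightedJacobi, hKx,
      ← Complex.ofReal_mul, ← Complex.ofReal_mul, ← Complex.ofReal_mul, ← Complex.ofReal_sub]
    refine congrArg Complex.ofReal ?_
    have p1 : (x - 1) ^ α ≠ 0 := pow_ne_zero _ hc2
    have p2 : (x + 1) ^ β ≠ 0 := pow_ne_zero _ hc1
    simp only [map_mul, Polynomial.aeval_C, map_neg, map_div₀, map_pow, map_one, map_ofNat]
    field_simp
    ring

end
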